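/- Let n ≥ 4, let A be the Cartan matrix of type D_n and ι an admissible sequence adapted to A. Then the set Tab_{D,ι} of column tableaux of type D is closed under the action of all operators S_{m,j}: for every T ∈ Tab_{D,ι}, every m ≥ 1 and every j ∈ I, one has S_{m,j}T ∈ Tab_{D,ι}. -/

import Mathlib

noncomputable section

/-- The coordinate linear form `x_k` (as a coefficient vector). -/
def xc (k : ℕ) : ℕ → ℚ := fun l => if l = k then 1 else 0

/-- Cartan matrix of type `A_n`. -/
def cartanA (_n : ℕ) (i j : ℕ) : ℤ :=
  if i = j then 2 else if i + 1 = j ∨ j + 1 = i then -1 else 0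

/-- Cartan matrix of type `B_n`. -/
def cartanB (n : ℕ) (i j : ℕ) : ℤ :=
  if i = j then 2
  else if i = n ∧ j = n - 1 then -2
  else if i + 1 = j ∨ j + 1 = i then -1 else 0

/-- Cartan matrix of type `C_n`. -/
def cartanC (n : ℕ) (i j : ℕ) : ℤ :=
  if i = j then 2
  else if i = n - 1 ∧ j = n then -2
  else if i + 1 = j ∨ j + 1 = i then -1 else 0

/-- Cartan matrix of type `D_n`. -/
def cartanD (n : ℕ) (i j : ℕ) : ℤ :=
  if i = j then 2
  else if (i = n - 1 ∧ j = n) ∨ (i = n ∧ j = n - 1) then 0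
  else if (i + 1 = j ∨ j + 1 = i) ∨ (i = n ∧ j = n - 2) ∨ (i = n - 2 ∧ j = n) then -1
  else 0

/-- `ι` (with positions indexed by `k ≥ 1`) takes values in `{1,…,n}`, has no two equal
consecutive entries, and every index occurs infinitely often. -/
def Admissible (n : ℕ) (ι : ℕ → ℕ) : Prop :=
  (∀ k, 1 ≤ k → 1 ≤ ι k ∧ ι k ≤ n) ∧
  (∀ k, 1 ≤ k → ι k ≠ ι (k + 1)) ∧
  (∀ i, 1 ≤ i → i ≤ n → ∀ N, ∃ k, N ≤ k ∧ ι k = i)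

/-- `k^+`: the next position after `k` carrying the same letter. -/
def kplus (ι : ℕ → ℕ) (k : ℕ) : ℕ := sInf {l | k < l ∧ ι l = ι k}

/-- `k^-`: the previous position (`≥ 1`) carrying the same letter, `0` if none. -/
def kminus (ι : ℕ → ℕ) (k : ℕ) : ℕ := sSup {l | 0 < l ∧ l < k ∧ ι l = ι k}

/-- The linear form `β_k` (with `β_0 = 0`). -/
def beta (A : ℕ → ℕ → ℤ) (ι : ℕ → ℕ) (k : ℕ) : ℕ → ℚ :=
  if k = 0 then 0
  else xc k + (∑ j ∈ Finset.Ioo k (kplus ι k), (A (ι k) (ι j) : ℚ) • xc j) + xc (kplus ι k)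

/-- The piecewise-linear operator `S_k`. -/
def Sop (A : ℕ → ℕ → ℤ) (ι : ℕ → ℕ) (k : ℕ) (φ : ℕ → ℚ) : ℕ → ℚ :=
  if 0 < φ k then φ - φ k • beta A ι k
  else φ - φ k • beta A ι (kminus ι k)

/-- Membership in `Ξ_ι`: forms obtained from some `x_{j_0}` by finitely many operators `S_k`. -/
inductive XiMem (A : ℕ → ℕ → ℤ) (ι : ℕ → ℕ) : (ℕ → ℚ) → Prop
  | base (k : ℕ) (hk : 1 ≤ k) : XiMem A ι (xc k)
  | step (k : ℕ) (hk : 1 ≤ k) (φ : ℕ → ℚ) (h : XiMem A ι φ) : XiMem A ι (Sop A ι k φ)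

/-- The set `Ξ_ι`. -/
def Xi (A : ℕ → ℕ → ℤ) (ι : ℕ → ℕ) : Set (ℕ → ℚ) := { φ | XiMem A ι φ }

/-- Forms obtained from a set `g` of generators by finitely many operators `S_k`. -/
inductive XiMemFrom (A : ℕ → ℕ → ℤ) (ι : ℕ → ℕ) (g : Set (ℕ → ℚ)) : (ℕ → ℚ) → Prop
  | base (φ : ℕ → ℚ) (h : φ ∈ g) : XiMemFrom A ι g φ
  | step (k : ℕ) (hk : 1 ≤ k) (φ : ℕ → ℚ) (h : XiMemFrom A ι g φ) :
      XiMemFrom A ι g (Sop A ι k φ)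

/-- `ι` is adapted to the Cartan matrix `A`: for `i ≠ j` with `a_{i,j} ≠ 0`, consecutive
members of the subsequence of `ι` consisting of the letters `i`, `j` are distinct. -/
def Adapted (n : ℕ) (A : ℕ → ℕ → ℤ) (ι : ℕ → ℕ) : Prop :=
  ∀ i j, 1 ≤ i → i ≤ n → 1 ≤ j → j ≤ n → i ≠ j → A i j ≠ 0 →
    ∀ k l, 1 ≤ k → k < l → (ι k = i ∨ ι k = j) → (ι l = i ∨ ι l = j) →
      (∀ m, k < m → m < l → ι m ≠ i ∧ ι m ≠ j) → ι k ≠ ι l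

/-- Position of the first occurrence of the letter `i` in `ι`. -/
def firstOcc (ι : ℕ → ℕ) (i : ℕ) : ℕ := sInf {k | 1 ≤ k ∧ ι k = i}

/-- `p_{i,j} = 1` iff the first occurrence of `i` precedes the first occurrence of `j`. -/
def pval (ι : ℕ → ℕ) (i j : ℕ) : ℕ := if firstOcc ι i < firstOcc ι j then 1 else 0

/-- The function `P(k)` for types A, B, C (and `P(k) = 0` for `k > n`, `k ≤ 1`). -/
def PABC (ι : ℕ → ℕ) (n k : ℕ) : ℕ :=
  if k ≤ n then ∑ t ∈ Finset.Icc 2 k, pval ι t (t - 1) else 0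

/-- The function `P(k)` for type D. -/
def PD (ι : ℕ → ℕ) (n k : ℕ) : ℕ :=
  if k = n then (∑ t ∈ Finset.Icc 2 (n - 2), pval ι t (t - 1)) + pval ι n (n - 2)
  else if k ≤ n then ∑ t ∈ Finset.Icc 2 k, pval ι t (t - 1) else 0

/-- `occPos ι j s`: the position of the `s`-th occurrence of the letter `j` in `ι`
(`0` for `s = 0`). -/
def occPos (ι : ℕ → ℕ) (j : ℕ) : ℕ → ℕ
  | 0 => 0
  | s + 1 => sInf {k | occPos ι j s < k ∧ ι k = j}

/-- The double-indexed coordinate form `x_{s,j}`, with the conventions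
`x_{s,0} = x_{s,n+1} = 0` and `x_{s,j} = 0` for `s ≤ 0`. -/
def xsj (ι : ℕ → ℕ) (n : ℕ) (s : ℤ) (j : ℕ) : ℕ → ℚ :=
  if 1 ≤ s ∧ 1 ≤ j ∧ j ≤ n then xc (occPos ι j s.toNat) else 0

/-- The double-indexed form `β_{s,j}`. -/
def betasj (A : ℕ → ℕ → ℤ) (ι : ℕ → ℕ) (s : ℤ) (j : ℕ) : ℕ → ℚ :=
  beta A ι (occPos ι j s.toNat)

/-- The double-indexed operator `S_{m,j}`. -/
def Ssj (A : ℕ → ℕ → ℤ) (ι : ℕ → ℕ) (m j : ℕ) (φ : ℕ → ℚ) : ℕ → ℚ :=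
  Sop A ι (occPos ι j m) φ

/- Entries of the ordered sets `J_X` are encoded as natural numbers:
an unbarred entry `j ∈ {1,…,n}` is encoded as `j`, a barred entry `j̄` is
encoded as `2n+1-j` (so that `n̄ = n+1, …, 1̄ = 2n` and the total order of
`J_B = J_C` is the numerical order), and the extra symbol `ovl(n+1)` of
types C and D is encoded as `0`. -/

/-- The box of type A. -/
def boxA (ι : ℕ → ℕ) (n : ℕ) (s : ℤ) (j : ℕ) : ℕ → ℚ :=
  xsj ι n (s + (PABC ι n j : ℤ)) j - xsj ι n (s + (PABC ι n (j - 1) : ℤ) + 1) (j - 1)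

/-- The box of type B. -/
def boxB (ι : ℕ → ℕ) (n : ℕ) (s : ℤ) (e : ℕ) : ℕ → ℚ :=
  if e ≤ n then
    xsj ι n (s + (PABC ι n e : ℤ)) e - xsj ι n (s + (PABC ι n (e - 1) : ℤ) + 1) (e - 1)
  else
    xsj ι n (s + (PABC ι n (2 * n - e) : ℤ) + (n : ℤ) - ((2 * n + 1 - e : ℕ) : ℤ) + 1)
        (2 * n - e)
      - xsj ι n (s + (PABC ι n (2 * n + 1 - e) : ℤ) + (n : ℤ) - ((2 * n + 1 - e : ℕ) : ℤ) + 1)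
          (2 * n + 1 - e)

/-- The box of type C (`ovl(n+1)` encoded as `0`). -/
def boxC (ι : ℕ → ℕ) (n : ℕ) (s : ℤ) (e : ℕ) : ℕ → ℚ :=
  if e = 0 then xsj ι n (s + (PABC ι n n : ℤ)) n
  else if e < n then
    xsj ι n (s + (PABC ι n e : ℤ)) e - xsj ι n (s + (PABC ι n (e - 1) : ℤ) + 1) (e - 1)
  else if e = n then
    (2 : ℚ) • xsj ι n (s + (PABC ι n n : ℤ)) n
      - xsj ι n (s + (PABC ι n (n - 1) : ℤ) + 1) (n - 1)
  else if e = n + 1 then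
    xsj ι n (s + (PABC ι n (n - 1) : ℤ) + 1) (n - 1)
      - (2 : ℚ) • xsj ι n (s + (PABC ι n n : ℤ) + 1) n
  else
    xsj ι n (s + (PABC ι n (2 * n - e) : ℤ) + (n : ℤ) - ((2 * n + 1 - e : ℕ) : ℤ) + 1)
        (2 * n - e)
      - xsj ι n (s + (PABC ι n (2 * n + 1 - e) : ℤ) + (n : ℤ) - ((2 * n + 1 - e : ℕ) : ℤ) + 1)
          (2 * n + 1 - e)

/-- The box of type D (`ovl(n+1)` encoded as `0`, `n̄` as `n+1`, `ovl(n-1)` as `n+2`). -/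
def boxD (ι : ℕ → ℕ) (n : ℕ) (s : ℤ) (e : ℕ) : ℕ → ℚ :=
  if e = 0 then xsj ι n (s + (PD ι n n : ℤ)) n
  else if e ≤ n - 2 then
    xsj ι n (s + (PD ι n e : ℤ)) e - xsj ι n (s + (PD ι n (e - 1) : ℤ) + 1) (e - 1)
  else if e = n - 1 then
    xsj ι n (s + (PD ι n (n - 1) : ℤ)) (n - 1) + xsj ι n (s + (PD ι n n : ℤ)) n
      - xsj ι n (s + (PD ι n (n - 2) : ℤ) + 1) (n - 2)
  else if e = n then
    xsj ι n (s + (PD ι n n : ℤ)) n - xsj ι n (s + (PD ι n (n - 1) : ℤ) + 1) (n - 1)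
  else if e = n + 1 then
    xsj ι n (s + (PD ι n (n - 1) : ℤ)) (n - 1) - xsj ι n (s + (PD ι n n : ℤ) + 1) n
  else if e = n + 2 then
    xsj ι n (s + (PD ι n (n - 2) : ℤ) + 1) (n - 2)
      - xsj ι n (s + (PD ι n (n - 1) : ℤ) + 1) (n - 1)
      - xsj ι n (s + (PD ι n n : ℤ) + 1) n
  else
    xsj ι n (s + (PD ι n (2 * n - e) : ℤ) + (n : ℤ) - ((2 * n + 1 - e : ℕ) : ℤ)) (2 * n - e)
      - xsj ι n (s + (PD ι n (2 * n + 1 - e) : ℤ) + (n : ℤ) - ((2 * n + 1 - e : ℕ) : ℤ))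
          (2 * n + 1 - e)

/-- The column tableau `[j_1,…,j_k]_s = Σ_{i=1}^k box_{s+k-i}(j_i)`. -/
def tab (box : ℤ → ℕ → ℕ → ℚ) (s : ℤ) (k : ℕ) (j : ℕ → ℕ) : ℕ → ℚ :=
  ∑ i ∈ Finset.Icc 1 k, box (s + (k : ℤ) - (i : ℤ)) (j i)

/-- The set `Tab_{A,ι}`. -/
def TabA (ι : ℕ → ℕ) (n : ℕ) : Set (ℕ → ℚ) :=
  { T | ∃ (k : ℕ) (s : ℤ) (j : ℕ → ℕ),
      1 ≤ k ∧ k ≤ n ∧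
      (∀ i, 1 ≤ i → i ≤ k → 1 ≤ j i ∧ j i ≤ n + 1) ∧
      (∀ i, 1 ≤ i → i < k → j i < j (i + 1)) ∧
      1 - (PABC ι n k : ℤ) ≤ s ∧
      T = tab (boxA ι n) s k j }

/-- `|·|` on encoded entries of `J_B = J_C`. -/
def absJ (n e : ℕ) : ℕ := if e ≤ n then e else 2 * n + 1 - e

/-- The set `Tab_{B,ι}`. -/
def TabB (ι : ℕ → ℕ) (n : ℕ) : Set (ℕ → ℚ) :=
  { T | ∃ (k : ℕ) (s : ℤ) (j : ℕ → ℕ),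
      1 ≤ k ∧ k ≤ n ∧
      (∀ i, 1 ≤ i → i ≤ k → 1 ≤ j i ∧ j i ≤ 2 * n) ∧
      (∀ i, 1 ≤ i → i < k → j i < j (i + 1)) ∧
      (k = n → ∀ l m, 1 ≤ l → l < m → m ≤ k → absJ n (j l) ≠ absJ n (j m)) ∧
      1 - (PABC ι n k : ℤ) ≤ s ∧
      T = tab (boxB ι n) s k j }

/-- Defining conditions of `Tab_{C,ι}` on the data `(k,s,j)`. -/
def TabCcond (ι : ℕ → ℕ) (n : ℕ) (k : ℕ) (s : ℤ) (j : ℕ → ℕ) : Prop :=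
  (1 ≤ k ∧ k ≤ n - 1 ∧
    (∀ i, 1 ≤ i → i ≤ k → 1 ≤ j i ∧ j i ≤ 2 * n) ∧
    (∀ i, 1 ≤ i → i < k → j i < j (i + 1)) ∧
    1 - (PABC ι n k : ℤ) ≤ s)
  ∨
  (j 1 = 0 ∧ 1 ≤ k ∧ k ≤ n + 1 ∧
    (∀ i, 2 ≤ i → i ≤ k → n + 1 ≤ j i ∧ j i ≤ 2 * n) ∧
    (∀ i, 2 ≤ i → i < k → j i < j (i + 1)) ∧
    1 - (PABC ι n n : ℤ) ≤ s)

/-- The set `Tab_{C,ι}`. -/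
def TabC (ι : ℕ → ℕ) (n : ℕ) : Set (ℕ → ℚ) :=
  { T | ∃ k s j, TabCcond ι n k s j ∧ T = tab (boxC ι n) s k j }

/-- The partial order on (encoded) `J_D`: `a ≤ b` iff `a = b`, or `a < b` numerically and
`(a,b)` is not the incomparable pair `(n, n̄)`. -/
def leD (n a b : ℕ) : Prop := a = b ∨ (a < b ∧ ¬(a = n ∧ b = n + 1))

/-- Defining conditions of `Tab_{D,ι}` on the data `(k,s,j)`. -/
def TabDcond (ι : ℕ → ℕ) (n : ℕ) (k : ℕ) (s : ℤ) (j : ℕ → ℕ) : Prop :=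
  (1 ≤ k ∧ k ≤ n - 2 ∧
    (∀ i, 1 ≤ i → i ≤ k → 1 ≤ j i ∧ j i ≤ 2 * n) ∧
    (∀ i, 1 ≤ i → i < k → ¬ leD n (j (i + 1)) (j i)) ∧
    1 - (PD ι n k : ℤ) ≤ s)
  ∨
  (j 1 = 0 ∧ 1 ≤ k ∧ k ≤ n + 1 ∧
    (∀ i, 2 ≤ i → i ≤ k → n + 1 ≤ j i ∧ j i ≤ 2 * n) ∧
    (∀ i, 2 ≤ i → i < k → j i < j (i + 1)) ∧
    (k % 2 = 0 → 1 - (PD ι n (n - 1) : ℤ) ≤ s) ∧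
    (k % 2 = 1 → 1 - (PD ι n n : ℤ) ≤ s))

/-- The set `Tab_{D,ι}`. -/
def TabD (ι : ℕ → ℕ) (n : ℕ) : Set (ℕ → ℚ) :=
  { T | ∃ k s j, TabDcond ι n k s j ∧ T = tab (boxD ι n) s k j }

end

/-!
An arrow `e → e'` of colour `j` joins two consecutive entries of `J_D`: replacing a box `e` by `e'`
subtracts from a tableau the form `β_{m,j}`, where `m` is determined by the level of the box. For
every `j` there are exactly two such arrows, and the coefficient of `x_{m,j}` in a tableau is the
sum of one contribution from each: `1` for a box `e` at one level, `-1` for a box `e'` one level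
below, `0` if both or neither occur. If the coefficient is positive (negative), `S_{m,j}` moves
boxes along (against) the arrows. The two contributions then do not have opposite signs, and this
is what keeps a neighbouring box from obstructing the move, so that the column condition survives.

This settles the tableaux without `ovl(n+1)`, and those with `ovl(n+1)` on top when `j ≠ n`. In
the remaining case the box `ovl(n+1)` contributes to the coefficient of `x_{m,n}` itself, and the
form `β_{m,n}` is the effect of deleting or inserting the pair `n̄, ovl(n-1)` just below it.
-/

section Occurrences

open Filter

variable {n : ℕ} {ι : ℕ → ℕ} {i j : ℕ}

theorem Admissible.frequently_eq (hι : Admissible n ι) (hj : j ∈ Finset.Icc 1 n) :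
    ∃ᶠ k in atTop, ι k = j :=
  frequently_atTop.2 (hι.2.2 j (Finset.mem_Icc.1 hj).1 (Finset.mem_Icc.1 hj).2)

theorem occPos_succ_mem (hj : ∃ᶠ k in atTop, ι k = j) (s : ℕ) :
    occPos ι j (s + 1) ∈ {k | occPos ι j s < k ∧ ι k = j} := by
  obtain ⟨k, hk, hkj⟩ := frequently_atTop.1 hj (occPos ι j s + 1)
  exact Nat.sInf_mem ⟨k, hk, hkj⟩

theorem occPos_succ_le {s k : ℕ} (h : occPos ι j s < k) (hk : ι k = j) :
    occPos ι j (s + 1) ≤ k :=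
  Nat.sInf_le ⟨h, hk⟩

theorem occPos_strictMono (hj : ∃ᶠ k in atTop, ι k = j) : StrictMono (occPos ι j) :=
  strictMono_nat_of_lt_succ fun s => (occPos_succ_mem hj s).1

theorem apply_occPos (hj : ∃ᶠ k in atTop, ι k = j) {s : ℕ} (hs : 1 ≤ s) :
    ι (occPos ι j s) = j := by
  obtain ⟨t, rfl⟩ := Nat.exists_eq_add_of_le' hs
  exact (occPos_succ_mem hj t).2

theorem occPos_pos (hj : ∃ᶠ k in atTop, ι k = j) {s : ℕ} (hs : 1 ≤ s) : 0 < occPos ι j s :=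
  occPos_strictMono hj hs

theorem exists_occPos_eq (hj : ∃ᶠ k in atTop, ι k = j) {l : ℕ} (hl : 1 ≤ l) (hlj : ι l = j) :
    ∃ t, 1 ≤ t ∧ occPos ι j t = l := by
  by_contra! hne
  have hlt : ∀ t, occPos ι j t < l := by
    intro t
    induction t with
    | zero => exact hl
    | succ t ih => exact (occPos_succ_le ih hlj).lt_of_ne (hne (t + 1) (by omega))
  exact (hlt l).not_ge ((occPos_strictMono hj).id_le l)

theorem occPos_eq_occPos_iff (hi : ∃ᶠ k in atTop, ι k = i) (hj : ∃ᶠ k in atTop, ι k = j)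
    {s t : ℕ} (hs : 1 ≤ s) (ht : 1 ≤ t) : occPos ι i s = occPos ι j t ↔ s = t ∧ i = j := by
  refine ⟨fun h => ?_, fun ⟨hst, hij⟩ => hst ▸ hij ▸ rfl⟩
  have hij : i = j := by rw [← apply_occPos hi hs, h, apply_occPos hj ht]
  subst hij
  exact ⟨(occPos_strictMono hi).injective h, rfl⟩

theorem kplus_occPos (hj : ∃ᶠ k in atTop, ι k = j) {s : ℕ} (hs : 1 ≤ s) :
    kplus ι (occPos ι j s) = occPos ι j (s + 1) := by
  rw [kplus, apply_occPos hj hs]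
  rfl

theorem kminus_occPos_succ (hj : ∃ᶠ k in atTop, ι k = j) (s : ℕ) :
    kminus ι (occPos ι j (s + 1)) = occPos ι j s := by
  rw [kminus, apply_occPos hj (by omega)]
  have hle : ∀ l ∈ {l | 0 < l ∧ l < occPos ι j (s + 1) ∧ ι l = j}, l ≤ occPos ι j s :=
    fun l ⟨_, hl, hlj⟩ => not_lt.1 fun h => hl.not_ge (occPos_succ_le h hlj)
  rcases Nat.eq_zero_or_pos s with rfl | hs
  · have hempty : {l | 0 < l ∧ l < occPos ι j (0 + 1) ∧ ι l = j} = ∅ :=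
      Set.eq_empty_of_forall_notMem fun l hl => hl.1.not_ge (hle l hl)
    rw [hempty]
    exact csSup_empty
  · exact IsGreatest.csSup_eq
      ⟨⟨occPos_pos hj hs, occPos_strictMono hj (by omega), apply_occPos hj hs⟩, hle⟩

theorem firstOcc_eq_occPos (ι : ℕ → ℕ) (j : ℕ) : firstOcc ι j = occPos ι j 1 := by
  simp only [firstOcc, occPos, Nat.succ_le_iff]

theorem pval_add_pval (hi : ∃ᶠ k in atTop, ι k = i) (hj : ∃ᶠ k in atTop, ι k = j) (hij : i ≠ j) :
    pval ι i j + pval ι j i = 1 := by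
  have hne : occPos ι i 1 ≠ occPos ι j 1 := fun h =>
    hij ((occPos_eq_occPos_iff hi hj le_rfl le_rfl).1 h).2
  simp only [pval, firstOcc_eq_occPos]
  split_ifs <;> omega

/-- The occurrences of the letters `i` and `j` in `ι` alternate: the condition that `Adapted`
imposes on each pair of neighbouring letters. -/
def Alternates (ι : ℕ → ℕ) (i j : ℕ) : Prop :=
  ∀ k l, 1 ≤ k → k < l → (ι k = i ∨ ι k = j) → (ι l = i ∨ ι l = j) →
    (∀ m, k < m → m < l → ι m ≠ i ∧ ι m ≠ j) → ι k ≠ ι l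

theorem Alternates.symm (h : Alternates ι i j) : Alternates ι j i :=
  fun k l hk hkl hik hil hm => h k l hk hkl hik.symm hil.symm fun m h₁ h₂ => (hm m h₁ h₂).symm

theorem Adapted.alternates {A : ℕ → ℕ → ℤ} (h : Adapted n A ι) (hi : i ∈ Finset.Icc 1 n)
    (hj : j ∈ Finset.Icc 1 n) (hij : i ≠ j) (hA : A i j ≠ 0) : Alternates ι i j := by
  rw [Finset.mem_Icc] at hi hj
  exact h i j hi.1 hi.2 hj.1 hj.2 hij hA

theorem Alternates.exists_between (h : Alternates ι i j) (hj : ∃ᶠ k in atTop, ι k = j) {t : ℕ}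
    (ht : 1 ≤ t) : ∃ p, occPos ι j t < p ∧ p < occPos ι j (t + 1) ∧ ι p = i := by
  by_contra! hno
  have hletter := apply_occPos hj ht
  have hletter' := apply_occPos hj (Nat.le_succ_of_le ht)
  exact h _ _ (occPos_pos hj ht) (occPos_strictMono hj t.lt_succ_self) (Or.inr hletter)
    (Or.inr hletter')
    (fun m hm hm' => ⟨hno m hm hm', fun hmj => hm'.not_ge (occPos_succ_le hm hmj)⟩)
    (hletter.trans hletter'.symm)

theorem Alternates.occPos_interlace (h : Alternates ι i j) (hi : ∃ᶠ k in atTop, ι k = i)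
    (hj : ∃ᶠ k in atTop, ι k = j) (hfirst : occPos ι j 1 < occPos ι i 1) {t : ℕ} (ht : 1 ≤ t) :
    occPos ι j t < occPos ι i t ∧ occPos ι i t < occPos ι j (t + 1) := by
  -- a letter `i` strictly between two successive `j`s bounds the next occurrence of `i`
  have hnext : ∀ {a b : ℕ}, 1 ≤ b → occPos ι i a ≤ occPos ι j b →
      occPos ι i (a + 1) < occPos ι j (b + 1) := fun hb hab => by
    obtain ⟨p, hp, hp', hpi⟩ := h.exists_between hj hb
    exact (occPos_succ_le (hab.trans_lt hp) hpi).trans_lt hp'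
  induction t, ht using Nat.le_induction with
  | base => exact ⟨hfirst, hnext le_rfl (Nat.zero_le _)⟩
  | succ t ht ih =>
    obtain ⟨p, hp, hp', hpj⟩ := h.symm.exists_between hi ht
    exact ⟨(occPos_succ_le (ih.1.trans hp) hpj).trans_lt hp', hnext (by omega) ih.2.le⟩

theorem Alternates.occPos_mem_Ioo_iff (h : Alternates ι i j) (hi : ∃ᶠ k in atTop, ι k = i)
    (hj : ∃ᶠ k in atTop, ι k = j) (hij : i ≠ j) {M t : ℕ} (hM : 1 ≤ M) (ht : 1 ≤ t) :
    occPos ι i t ∈ Finset.Ioo (occPos ι j M) (occPos ι j (M + 1)) ↔ t = M + pval ι i j := by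
  have hmono_i := occPos_strictMono hi
  have hmono_j := occPos_strictMono hj
  have hne : occPos ι i 1 ≠ occPos ι j 1 := fun h =>
    hij ((occPos_eq_occPos_iff hi hj le_rfl le_rfl).1 h).2
  rw [Finset.mem_Ioo, pval, firstOcc_eq_occPos, firstOcc_eq_occPos]
  split_ifs with hfirst
  · have hlace := fun {t} => h.symm.occPos_interlace hj hi hfirst (t := t)
    refine ⟨fun ⟨hlow, hupp⟩ => ?_, by rintro rfl; exact ⟨(hlace hM).2, (hlace (by omega)).1⟩⟩
    have hMt : M < t := hmono_j.lt_iff_lt.1 (hlow.trans (hlace ht).1)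
    have htM : t < M + 2 := hmono_i.lt_iff_lt.1 (hupp.trans (hlace (by omega)).2)
    omega
  · have hlace := fun {t} => h.occPos_interlace hi hj (by omega) (t := t)
    refine ⟨fun ⟨hlow, hupp⟩ => ?_, fun htM => htM ▸ hlace hM⟩
    have hMt : M < t + 1 := hmono_j.lt_iff_lt.1 (hlow.trans (hlace ht).2)
    have htM : t < M + 1 := hmono_j.lt_iff_lt.1 ((hlace ht).1.trans hupp)
    omega

theorem Alternates.mem_Ioo_occPos_iff (h : Alternates ι i j) (hi : ∃ᶠ k in atTop, ι k = i)
    (hj : ∃ᶠ k in atTop, ι k = j) (hij : i ≠ j) {M l : ℕ} (hM : 1 ≤ M) :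
    l ∈ Finset.Ioo (occPos ι j M) (occPos ι j (M + 1)) ∧ ι l = i ↔
      l = occPos ι i (M + pval ι i j) := by
  constructor
  · rintro ⟨hl, hli⟩
    obtain ⟨t, ht, rfl⟩ := exists_occPos_eq hi (Nat.zero_lt_of_lt (Finset.mem_Ioo.1 hl).1) hli
    rw [(h.occPos_mem_Ioo_iff hi hj hij hM ht).1 hl]
  · rintro rfl
    exact ⟨(h.occPos_mem_Ioo_iff hi hj hij hM (by omega)).2 rfl, apply_occPos hi (by omega)⟩

end Occurrences

section Forms

open Filter

variable {n : ℕ} {ι : ℕ → ℕ} {A : ℕ → ℕ → ℤ} {i j : ℕ}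

theorem xsj_of_notMem (ι : ℕ → ℕ) (s : ℤ) (hj : j ∉ Finset.Icc 1 n) : xsj ι n s j = 0 :=
  if_neg fun h => hj (Finset.mem_Icc.2 h.2)

theorem xsj_natCast {s : ℕ} (hs : 1 ≤ s) (hj : j ∈ Finset.Icc 1 n) :
    xsj ι n s j = xc (occPos ι j s) := by
  rw [Finset.mem_Icc] at hj
  exact if_pos ⟨by omega, hj⟩

theorem xsj_apply_occPos (hι : Admissible n ι) (hj : j ∈ Finset.Icc 1 n) {m : ℕ} (hm : 1 ≤ m)
    (s : ℤ) (i : ℕ) : xsj ι n s i (occPos ι j m) = if s = m ∧ i = j then 1 else 0 := by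
  by_cases hsi : 1 ≤ s ∧ 1 ≤ i ∧ i ≤ n
  · have hi : i ∈ Finset.Icc 1 n := Finset.mem_Icc.2 hsi.2
    lift s to ℕ using by omega
    have hs : 1 ≤ s := by omega
    rw [xsj_natCast hs hi, xc]
    refine if_congr ?_ rfl rfl
    rw [eq_comm, occPos_eq_occPos_iff (hι.frequently_eq hi) (hι.frequently_eq hj) hs hm,
      Nat.cast_inj]
  · rw [xsj, if_neg hsi, if_neg]
    · rfl
    · rintro ⟨rfl, rfl⟩
      exact hsi ⟨by omega, Finset.mem_Icc.1 hj⟩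

theorem sum_Ioo_occPos_smul_xc (hι : Admissible n ι) (hA : Adapted n A ι)
    (hj : j ∈ Finset.Icc 1 n) {M : ℕ} (hM : 1 ≤ M) :
    ∑ l ∈ Finset.Ioo (occPos ι j M) (occPos ι j (M + 1)), (A j (ι l) : ℚ) • xc l =
      ∑ i ∈ (Finset.Icc 1 n).erase j, (A j i : ℚ) • xsj ι n (M + pval ι i j) i := by
  have hfreq_j := hι.frequently_eq hj
  have hneighbour : ∀ i ∈ (Finset.Icc 1 n).erase j, A j i ≠ 0 → ∀ l,
      l ∈ Finset.Ioo (occPos ι j M) (occPos ι j (M + 1)) ∧ ι l = i ↔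
        l = occPos ι i (M + pval ι i j) := fun i hi hAi l => by
    obtain ⟨hij, hi⟩ := Finset.mem_erase.1 hi
    exact (hA.alternates hj hi hij.symm hAi).symm.mem_Ioo_occPos_iff (hι.frequently_eq hi)
      hfreq_j hij hM
  have hletter : ∀ l ∈ Finset.Ioo (occPos ι j M) (occPos ι j (M + 1)),
      ι l ∈ (Finset.Icc 1 n).erase j := fun l hl => by
    rw [Finset.mem_Ioo] at hl
    exact Finset.mem_erase.2 ⟨fun hlj => hl.2.not_ge (occPos_succ_le hl.1 hlj),
      Finset.mem_Icc.2 (hι.1 l (by omega))⟩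
  have hcoeff {a : ℤ} {v : ℕ → ℚ} (h : (a : ℚ) • v ≠ 0) : a ≠ 0 := by
    rintro rfl
    exact h (by rw [Int.cast_zero, zero_smul])
  refine Finset.sum_bij_ne_zero (fun l _ _ => ι l) (fun l hl _ => hletter l hl) ?_ ?_ ?_
  · intro l hl hl0 l' hl' _ hll'
    have hiff := hneighbour _ (hletter l hl) (hcoeff hl0)
    rw [(hiff l).1 ⟨hl, rfl⟩, (hiff l').1 ⟨hl', hll'.symm⟩]
  · intro i hi hi0
    obtain ⟨hl, hli⟩ := (hneighbour i hi (hcoeff hi0) _).2 rfl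
    refine ⟨_, hl, ?_, hli⟩
    rwa [hli, ← xsj_natCast (by omega) (Finset.mem_of_mem_erase hi), Nat.cast_add]
  · intro l hl hl0
    have hl_eq := (hneighbour _ (hletter l hl) (hcoeff hl0) l).1 ⟨hl, rfl⟩
    rw [← Nat.cast_add, xsj_natCast (by omega) (Finset.mem_of_mem_erase (hletter l hl)), ← hl_eq]

theorem beta_zero (A : ℕ → ℕ → ℤ) (ι : ℕ → ℕ) : beta A ι 0 = 0 :=
  if_pos rfl

theorem betasj_zero (A : ℕ → ℕ → ℤ) (ι : ℕ → ℕ) (j : ℕ) : betasj A ι 0 j = 0 :=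
  beta_zero A ι

theorem betasj_eq_sub_sum (hι : Admissible n ι) (hA : Adapted n A ι) (hj : j ∈ Finset.Icc 1 n)
    {N : Finset ℕ} (hN : ∀ i ∈ Finset.Icc 1 n, i ≠ j → A j i = if i ∈ N then -1 else 0)
    (hjN : j ∉ N) {M : ℤ} (hM : 1 ≤ M) :
    betasj A ι M j =
      xsj ι n M j + xsj ι n (M + 1) j - ∑ i ∈ N, xsj ι n (M + pval ι i j) i := by
  have hfreq := hι.frequently_eq hj
  lift M to ℕ using by omega
  have hM : 1 ≤ M := by omega
  have hsum : ∑ i ∈ (Finset.Icc 1 n).erase j, (A j i : ℚ) • xsj ι n (M + pval ι i j) i =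
      ∑ i ∈ N, -xsj ι n (M + pval ι i j) i := by
    refine Finset.sum_congr_of_eq_on_inter (fun i hi hiN => ?_) (fun i hi hi' => ?_)
      (fun i hi hi' => ?_)
    · obtain ⟨hij, hi⟩ := Finset.mem_erase.1 hi
      rw [hN i hi hij, if_neg hiN, Int.cast_zero, zero_smul]
    · have hij : i ≠ j := fun h => hjN (h ▸ hi)
      rw [xsj_of_notMem _ _ fun h => hi' (Finset.mem_erase.2 ⟨hij, h⟩), neg_zero]
    · obtain ⟨hij, hi⟩ := Finset.mem_erase.1 hi
      rw [hN i hi hij, if_pos hi', Int.cast_neg, Int.cast_one, neg_one_smul]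
  rw [betasj, Int.toNat_natCast, beta, if_neg (occPos_pos hfreq hM).ne', kplus_occPos hfreq hM,
    apply_occPos hfreq hM, sum_Ioo_occPos_smul_xc hι hA hj hM, hsum, Finset.sum_neg_distrib,
    ← xsj_natCast hM hj, ← xsj_natCast (Nat.le_succ_of_le hM) hj]
  push_cast
  abel

theorem Ssj_eq_ite (hι : Admissible n ι) (hj : j ∈ Finset.Icc 1 n) {m : ℕ} (hm : 1 ≤ m)
    (φ : ℕ → ℚ) : Ssj A ι m j φ =
      if 0 < φ (occPos ι j m) then φ - φ (occPos ι j m) • betasj A ι m j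
      else φ - φ (occPos ι j m) • betasj A ι (m - 1) j := by
  obtain ⟨m, rfl⟩ := Nat.exists_eq_add_of_le' hm
  rw [Ssj, Sop, kminus_occPos_succ (hι.frequently_eq hj)]
  simp [betasj]

theorem Ssj_eq_self {m : ℕ} {φ : ℕ → ℚ} (h : φ (occPos ι j m) = 0) : Ssj A ι m j φ = φ := by
  simp [Ssj, Sop, h]

end Forms

section TypeD

variable {n : ℕ} {ι : ℕ → ℕ} {j : ℕ}

/-- The coordinate form `x_{s+P(j),j}`. Shifting the first index by `P(j)` makes the formulas for
the type `D` boxes and for the forms `β` independent of `ι`. -/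
noncomputable def xD (ι : ℕ → ℕ) (n : ℕ) (s : ℤ) (j : ℕ) : ℕ → ℚ := xsj ι n (s + PD ι n j) j

theorem xD_zero (ι : ℕ → ℕ) (n : ℕ) (s : ℤ) : xD ι n s 0 = 0 :=
  xsj_of_notMem _ _ fun h => absurd (Finset.mem_Icc.1 h).1 (by omega)

theorem xD_apply_occPos (hι : Admissible n ι) (hj : j ∈ Finset.Icc 1 n) {m : ℕ} (hm : 1 ≤ m)
    (s : ℤ) (i : ℕ) :
    xD ι n s i (occPos ι j m) = if i = j ∧ s + PD ι n j = m then 1 else 0 := by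
  rw [xD, xsj_apply_occPos hι hj hm]
  refine if_congr ⟨?_, ?_⟩ rfl rfl
  · rintro ⟨hs, rfl⟩
    exact ⟨rfl, hs⟩
  · rintro ⟨rfl, hs⟩
    exact ⟨hs, rfl⟩

theorem PD_succ (hj : 1 ≤ j) (hjn : j + 1 < n) : PD ι n (j + 1) = PD ι n j + pval ι (j + 1) j := by
  rw [PD, if_neg (by omega), if_pos (by omega), PD, if_neg (by omega), if_pos (by omega),
    Finset.sum_Icc_succ_top (by omega), Nat.add_sub_cancel]

theorem PD_self (hn : 3 ≤ n) : PD ι n n = PD ι n (n - 2) + pval ι n (n - 2) := by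
  rw [PD, if_pos rfl, PD, if_neg (by omega), if_pos (by omega)]

theorem xsj_pval_succ (hj : 1 ≤ j) (hjn : j + 1 < n) (s : ℤ) :
    xsj ι n (s + PD ι n j + pval ι (j + 1) j) (j + 1) = xD ι n s (j + 1) := by
  rw [xD, PD_succ hj hjn, Nat.cast_add, add_assoc]

theorem xsj_pval_self (hn : 3 ≤ n) (s : ℤ) :
    xsj ι n (s + PD ι n (n - 2) + pval ι n (n - 2)) n = xD ι n s n := by
  rw [xD, PD_self hn, Nat.cast_add, add_assoc]

theorem xsj_pval_pred (hι : Admissible n ι) (hj : j < n) (s : ℤ) :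
    xsj ι n (s + PD ι n j + pval ι (j - 1) j) (j - 1) = xD ι n (s + 1) (j - 1) := by
  rcases Nat.lt_or_ge j 2 with hj2 | hj2
  · rw [show j - 1 = 0 by omega, xD_zero, xsj_of_notMem _ _ (by simp)]
  · have hpval := pval_add_pval (hι.frequently_eq (j := j - 1) (by simp; omega))
      (hι.frequently_eq (j := j) (by simp; omega)) (by omega)
    have hPD := PD_succ (ι := ι) (j := j - 1) (n := n) (by omega) (by omega)
    rw [Nat.sub_add_cancel (by omega)] at hPD
    rw [xD]
    congr 1
    omega

theorem betasj_cartanD_of_lt (hι : Admissible n ι) (hA : Adapted n (cartanD n) ι) (hj : 1 ≤ j)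
    (hjn : j + 3 ≤ n) {s : ℤ} (hs : 1 ≤ s + PD ι n j) :
    betasj (cartanD n) ι (s + PD ι n j) j =
      xD ι n s j + xD ι n (s + 1) j - xD ι n (s + 1) (j - 1) - xD ι n s (j + 1) := by
  rw [betasj_eq_sub_sum hι hA (N := {j - 1, j + 1}) (by simp; omega) ?_ (by simp; omega) hs,
    Finset.sum_pair (by omega), xsj_pval_pred hι (by omega), xsj_pval_succ hj (by omega),
    add_right_comm s, ← sub_sub]
  · rfl
  · intro i _ _
    grind [cartanD]

theorem betasj_cartanD_sub_two (hn : 3 ≤ n) (hι : Admissible n ι) (hA : Adapted n (cartanD n) ι)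
    {s : ℤ} (hs : 1 ≤ s + PD ι n (n - 2)) :
    betasj (cartanD n) ι (s + PD ι n (n - 2)) (n - 2) =
      xD ι n s (n - 2) + xD ι n (s + 1) (n - 2) - xD ι n (s + 1) (n - 2 - 1)
        - (xD ι n s (n - 1) + xD ι n s n) := by
  have hsucc := xsj_pval_succ (ι := ι) (j := n - 2) (n := n) (by omega) (by omega) s
  rw [show n - 2 + 1 = n - 1 by omega] at hsucc
  rw [betasj_eq_sub_sum hι hA (N := {n - 2 - 1, n - 1, n}) (by simp; omega) ?_ (by simp; omega) hs,
    Finset.sum_insert (by simp; omega), Finset.sum_pair (by omega),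
    xsj_pval_pred hι (by omega), hsucc, add_right_comm s, ← sub_sub, xsj_pval_self hn]
  · rfl
  · intro i _ _
    grind [cartanD]

theorem betasj_cartanD_sub_one (hn : 3 ≤ n) (hι : Admissible n ι) (hA : Adapted n (cartanD n) ι)
    {s : ℤ} (hs : 1 ≤ s + PD ι n (n - 1)) :
    betasj (cartanD n) ι (s + PD ι n (n - 1)) (n - 1) =
      xD ι n s (n - 1) + xD ι n (s + 1) (n - 1) - xD ι n (s + 1) (n - 2) := by
  rw [betasj_eq_sub_sum hι hA (N := {n - 1 - 1}) (by simp; omega) ?_ (by simp; omega) hs,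
    Finset.sum_singleton, xsj_pval_pred hι (by omega), add_right_comm s]
  · rfl
  · intro i _ _
    grind [cartanD]

theorem betasj_cartanD_self (hn : 3 ≤ n) (hι : Admissible n ι) (hA : Adapted n (cartanD n) ι)
    {s : ℤ} (hs : 1 ≤ s + PD ι n n) :
    betasj (cartanD n) ι (s + PD ι n n) n =
      xD ι n s n + xD ι n (s + 1) n - xD ι n (s + 1) (n - 2) := by
  have hpval := pval_add_pval (hι.frequently_eq (j := n) (by simp; omega))
    (hι.frequently_eq (j := n - 2) (by simp; omega)) (by omega)
  have hPD := PD_self (ι := ι) hn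
  rw [betasj_eq_sub_sum hι hA (N := {n - 2}) (by simp; omega) ?_ (by simp; omega) hs,
    Finset.sum_singleton, add_right_comm s,
    show s + (PD ι n n : ℤ) + pval ι (n - 2) n = s + 1 + PD ι n (n - 2) by omega]
  · rfl
  · intro i _ _
    grind [cartanD]

theorem boxD_zero (ι : ℕ → ℕ) (n : ℕ) (s : ℤ) : boxD ι n s 0 = xD ι n s n :=
  if_pos rfl

theorem boxD_of_le {e : ℕ} (he : 1 ≤ e) (hen : e + 2 ≤ n) (s : ℤ) :
    boxD ι n s e = xD ι n s e - xD ι n (s + 1) (e - 1) := by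
  rw [boxD, if_neg (by omega), if_pos (by omega), xD, xD, add_right_comm s 1]

theorem boxD_sub_one (hn : 3 ≤ n) (s : ℤ) :
    boxD ι n s (n - 1) = xD ι n s (n - 1) + xD ι n s n - xD ι n (s + 1) (n - 2) := by
  rw [boxD, if_neg (by omega), if_neg (by omega), if_pos rfl, xD, xD, xD, add_right_comm s 1]

theorem boxD_self (hn : 3 ≤ n) (s : ℤ) : boxD ι n s n = xD ι n s n - xD ι n (s + 1) (n - 1) := by
  rw [boxD, if_neg (by omega), if_neg (by omega), if_neg (by omega), if_pos rfl, xD, xD,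
    add_right_comm s 1]

theorem boxD_add_one (hn : 3 ≤ n) (s : ℤ) :
    boxD ι n s (n + 1) = xD ι n s (n - 1) - xD ι n (s + 1) n := by
  rw [boxD, if_neg (by omega), if_neg (by omega), if_neg (by omega), if_neg (by omega), if_pos rfl,
    xD, xD, add_right_comm s 1]

theorem boxD_add_two (hn : 3 ≤ n) (s : ℤ) :
    boxD ι n s (n + 2) = xD ι n (s + 1) (n - 2) - xD ι n (s + 1) (n - 1) - xD ι n (s + 1) n := by
  rw [boxD, if_neg (by omega), if_neg (by omega), if_neg (by omega), if_neg (by omega),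
    if_neg (by omega), if_pos rfl, xD, xD, xD, add_right_comm s 1, add_right_comm s 1,
    add_right_comm s 1]

theorem boxD_bar {e i : ℕ} (hi : 1 ≤ i) (hin : i + 2 ≤ n) (he : e + i = 2 * n + 1) (s : ℤ) :
    boxD ι n s e = xD ι n (s + n - i) (i - 1) - xD ι n (s + n - i) i := by
  rw [boxD, if_neg (by omega), if_neg (by omega), if_neg (by omega), if_neg (by omega),
    if_neg (by omega), if_neg (by omega), show 2 * n - e = i - 1 by omega,
    show 2 * n + 1 - e = i by omega, xD, xD]
  congr 2 <;> ring

theorem boxD_entry_cases {e : ℕ} (he : e ∈ Set.Icc 1 (2 * n)) :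
    (1 ≤ e ∧ e + 2 ≤ n) ∨ e = n - 1 ∨ e = n ∨ e = n + 1 ∨ e = n + 2 ∨
      ∃ i, 1 ≤ i ∧ i + 2 ≤ n ∧ e + i = 2 * n + 1 := by
  rw [Set.mem_Icc] at he
  by_cases hbar : n + 3 ≤ e
  · exact Or.inr (Or.inr (Or.inr (Or.inr (Or.inr
      ⟨2 * n + 1 - e, by omega, by omega, by omega⟩))))
  · omega

end TypeD

section Arrows

variable {n : ℕ} {ι : ℕ → ℕ} {j : ℕ}

/-- `x ≺ y`: in a column of type `D`, the entry `x` may stand directly above `y`. -/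
def CanPrecede (n x y : ℕ) : Prop := ¬ leD n y x

/-- An arrow `src → tgt` between entries of `J_D`: the box `src` at level `s` may be replaced by
`tgt`, which changes the tableau by `-β_{s+shift,j}` for the colour `j` of the arrow. -/
structure BoxArrow where
  src : ℕ
  tgt : ℕ
  shift : ℤ

/-- The contribution of the arrow `a` to the coefficient of `x_{m,j}` in the box `e` at
level `s`. -/
def BoxArrow.coeff (a : BoxArrow) (m s : ℤ) (e : ℕ) : ℚ :=
  (if s = m - a.shift ∧ e = a.src then 1 else 0) -
    if s = m - a.shift - 1 ∧ e = a.tgt then 1 else 0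

/-- What is needed of an arrow `a` of colour `j`, given the other arrow `b` of that colour, in order
to move boxes along `a` in both directions: the effect on the linear form, and the exact
obstructions to staying a column. -/
structure BoxArrow.IsMove (ι : ℕ → ℕ) (n j : ℕ) (a b : BoxArrow) : Prop where
  sub_eq_betasj : ∀ s, 1 ≤ s + a.shift →
    boxD ι n s a.src - boxD ι n s a.tgt = betasj (cartanD n) ι (s + a.shift) j
  src_ne_tgt : a.src ≠ a.tgt
  src_ne_src : a.src ≠ b.src
  src_ne_tgt' : a.src ≠ b.tgt
  tgt_ne_src : a.tgt ≠ b.src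
  tgt_ne_tgt : a.tgt ≠ b.tgt
  raise_above : ∀ x, CanPrecede n x a.src → CanPrecede n x a.tgt
  raise_below : ∀ y, CanPrecede n a.src y →
    CanPrecede n a.tgt y ∨ y = a.tgt ∨ y = b.tgt ∧ a.shift = b.shift
  lower_above : ∀ x, CanPrecede n x a.tgt →
    CanPrecede n x a.src ∨ x = a.src ∨ x = b.src ∧ a.shift = b.shift
  lower_below : ∀ y, CanPrecede n a.tgt y → CanPrecede n a.src y

/-- `a` and `b` are the two arrows of colour `j`: they are moves and account for all occurrences of
the coordinates `x_{m,j}` in the boxes other than `ovl(n+1)`. -/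
structure IsArrowPair (ι : ℕ → ℕ) (n j : ℕ) (a b : BoxArrow) : Prop where
  boxD_apply : ∀ {m : ℕ}, 1 ≤ m → ∀ {e : ℕ}, e ∈ Set.Icc 1 (2 * n) → ∀ s : ℤ,
    boxD ι n s e (occPos ι j m) = a.coeff m s e + b.coeff m s e
  left : a.IsMove ι n j b
  right : b.IsMove ι n j a

theorem IsArrowPair.symm {a b : BoxArrow} (h : IsArrowPair ι n j a b) : IsArrowPair ι n j b a :=
  ⟨fun hm _ he s => (h.boxD_apply hm he s).trans (add_comm _ _), h.right, h.left⟩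

/-- The arrow `j → j+1`, respectively `n-1 → n̄` for `j = n`. -/
noncomputable def arrowD (ι : ℕ → ℕ) (n j : ℕ) : BoxArrow :=
  if j = n then ⟨n - 1, n + 1, PD ι n n⟩ else ⟨j, j + 1, PD ι n j⟩

/-- The arrow `ovl(j+1) → j̄`, respectively `n → ovl(n-1)` for `j = n`. -/
noncomputable def arrowBarD (ι : ℕ → ℕ) (n j : ℕ) : BoxArrow :=
  if j = n then ⟨n, n + 2, PD ι n n⟩ else ⟨2 * n - j, 2 * n + 1 - j, PD ι n j + (n - j - 1)⟩

theorem boxD_apply_occPos (hn : 3 ≤ n) (hι : Admissible n ι) (hj : j ∈ Finset.Icc 1 n) {m : ℕ}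
    (hm : 1 ≤ m) {e : ℕ} (he : e ∈ Set.Icc 1 (2 * n)) (s : ℤ) :
    boxD ι n s e (occPos ι j m) =
      (arrowD ι n j).coeff m s e + (arrowBarD ι n j).coeff m s e := by
  have hX := xD_apply_occPos hι hj hm
  rw [Finset.mem_Icc] at hj
  simp only [arrowD, arrowBarD, BoxArrow.coeff]
  obtain ⟨h1, h2⟩ | rfl | rfl | rfl | rfl | ⟨i, h1, h2, h3⟩ := boxD_entry_cases he
  · rw [boxD_of_le h1 h2, Pi.sub_apply, hX, hX]; grind (splits := 16)
  · rw [boxD_sub_one hn, Pi.sub_apply, Pi.add_apply, hX, hX, hX]; grind (splits := 16)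
  · rw [boxD_self hn, Pi.sub_apply, hX, hX]; grind (splits := 16)
  · rw [boxD_add_one hn, Pi.sub_apply, hX, hX]; grind (splits := 16)
  · rw [boxD_add_two hn, Pi.sub_apply, Pi.sub_apply, hX, hX, hX]; grind (splits := 16)
  · rw [boxD_bar h1 h2 h3, Pi.sub_apply, hX, hX]; grind (splits := 16)

theorem boxD_sub_boxD_succ (hn : 3 ≤ n) (hι : Admissible n ι) (hA : Adapted n (cartanD n) ι)
    (hj : 1 ≤ j) (hjn : j < n) {s : ℤ} (hs : 1 ≤ s + PD ι n j) :
    boxD ι n s j - boxD ι n s (j + 1) = betasj (cartanD n) ι (s + PD ι n j) j := by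
  obtain hj3 | rfl | rfl : j + 3 ≤ n ∨ j = n - 2 ∨ j = n - 1 := by omega
  · rw [betasj_cartanD_of_lt hι hA hj hj3 hs, boxD_of_le hj (by omega),
      boxD_of_le (by omega) (by omega), Nat.add_sub_cancel]
    abel
  · rw [betasj_cartanD_sub_two hn hι hA hs, boxD_of_le hj (by omega),
      show n - 2 + 1 = n - 1 by omega, boxD_sub_one hn]
    abel
  · rw [betasj_cartanD_sub_one hn hι hA hs, boxD_sub_one hn,
      show n - 1 + 1 = n by omega, boxD_self hn]
    abel

theorem boxD_bar_succ_sub_boxD_bar (hn : 3 ≤ n) (hι : Admissible n ι)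
    (hA : Adapted n (cartanD n) ι) (hj : 1 ≤ j) (hjn : j < n) {s : ℤ}
    (hs : 1 ≤ s + (PD ι n j + (n - j - 1))) :
    boxD ι n s (2 * n - j) - boxD ι n s (2 * n + 1 - j) =
      betasj (cartanD n) ι (s + (PD ι n j + (n - j - 1))) j := by
  have hcomm : s + (PD ι n j + (n - j - 1)) = s + n - j - 1 + PD ι n j := by ring
  rw [hcomm] at hs ⊢
  obtain hj3 | rfl | rfl : j + 3 ≤ n ∨ j = n - 2 ∨ j = n - 1 := by omega
  · rw [betasj_cartanD_of_lt hι hA hj hj3 hs,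
      boxD_bar (i := j + 1) (by omega) (by omega) (by omega),
      boxD_bar (i := j) hj (by omega) (by omega), sub_add_cancel, Nat.add_sub_cancel,
      show s + n - (j + 1 : ℕ) = s + n - j - 1 by push_cast; ring]
    abel
  · rw [show s + n - (n - 2 : ℕ) - 1 = s + 1 by omega] at hs ⊢
    rw [betasj_cartanD_sub_two hn hι hA hs,
      show 2 * n - (n - 2) = n + 2 by omega, boxD_add_two hn,
      boxD_bar (i := n - 2) hj (by omega) (by omega),
      show s + n - (n - 2 : ℕ) = s + 1 + 1 by omega]
    abel
  · rw [show s + n - (n - 1 : ℕ) - 1 = s by omega] at hs ⊢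
    rw [betasj_cartanD_sub_one hn hι hA hs, show 2 * n - (n - 1) = n + 1 by omega,
      show 2 * n + 1 - (n - 1) = n + 2 by omega, boxD_add_one hn, boxD_add_two hn]
    abel

theorem boxD_arrowD_sub (hn : 3 ≤ n) (hι : Admissible n ι) (hA : Adapted n (cartanD n) ι)
    (hj : j ∈ Finset.Icc 1 n) (s : ℤ) (hs : 1 ≤ s + (arrowD ι n j).shift) :
    boxD ι n s (arrowD ι n j).src - boxD ι n s (arrowD ι n j).tgt =
      betasj (cartanD n) ι (s + (arrowD ι n j).shift) j := by
  rw [Finset.mem_Icc] at hj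
  obtain rfl | hjn := eq_or_ne j n
  · rw [arrowD, if_pos rfl] at hs ⊢
    rw [betasj_cartanD_self hn hι hA hs, boxD_sub_one hn, boxD_add_one hn]
    abel
  · rw [arrowD, if_neg hjn] at hs ⊢
    exact boxD_sub_boxD_succ hn hι hA hj.1 (by omega) hs

theorem boxD_arrowBarD_sub (hn : 3 ≤ n) (hι : Admissible n ι) (hA : Adapted n (cartanD n) ι)
    (hj : j ∈ Finset.Icc 1 n) (s : ℤ) (hs : 1 ≤ s + (arrowBarD ι n j).shift) :
    boxD ι n s (arrowBarD ι n j).src - boxD ι n s (arrowBarD ι n j).tgt =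
      betasj (cartanD n) ι (s + (arrowBarD ι n j).shift) j := by
  rw [Finset.mem_Icc] at hj
  obtain rfl | hjn := eq_or_ne j n
  · rw [arrowBarD, if_pos rfl] at hs ⊢
    rw [betasj_cartanD_self hn hι hA hs, boxD_self hn, boxD_add_two hn]
    abel
  · rw [arrowBarD, if_neg hjn] at hs ⊢
    exact boxD_bar_succ_sub_boxD_bar hn hι hA hj.1 (by omega) hs

theorem isArrowPair_arrowD (hn : 3 ≤ n) (hι : Admissible n ι) (hA : Adapted n (cartanD n) ι)
    (hj : j ∈ Finset.Icc 1 n) : IsArrowPair ι n j (arrowD ι n j) (arrowBarD ι n j) := by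
  have hjn := Finset.mem_Icc.1 hj
  refine ⟨fun hm _ he => boxD_apply_occPos hn hι hj hm he,
    ⟨boxD_arrowD_sub hn hι hA hj, ?_, ?_, ?_, ?_, ?_, ?_, ?_, ?_, ?_⟩,
    ⟨boxD_arrowBarD_sub hn hι hA hj, ?_, ?_, ?_, ?_, ?_, ?_, ?_, ?_, ?_⟩⟩
  all_goals grind [arrowD, arrowBarD, CanPrecede, leD]

end Arrows

section Columns

open Function

variable {n : ℕ} {ι : ℕ → ℕ} {j m k i e v : ℕ} {s l : ℤ} {a b : BoxArrow} {C : Set ℕ}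
  {c : ℕ → ℕ}

/-- `c 1, …, c k` form a column of type `D` with entries in `C`. -/
structure IsColumn (n : ℕ) (C : Set ℕ) (k : ℕ) (c : ℕ → ℕ) : Prop where
  mem : ∀ i, 1 ≤ i → i ≤ k → c i ∈ C
  canPrecede : ∀ i, 1 ≤ i → i < k → CanPrecede n (c i) (c (i + 1))

theorem IsColumn.update (hc : IsColumn n C k c) (hv : v ∈ C)
    (habove : ∀ i', 1 ≤ i' → i' + 1 = i → CanPrecede n (c i') v)
    (hbelow : i < k → CanPrecede n v (c (i + 1))) : IsColumn n C k (update c i v) := by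
  refine ⟨fun i' h1 hk => ?_, fun i' h1 hk => ?_⟩
  · obtain rfl | hne := eq_or_ne i' i
    · rwa [update_self]
    · rw [update_of_ne hne]
      exact hc.mem i' h1 hk
  · obtain rfl | hne := eq_or_ne i' i
    · rw [update_self, update_of_ne (by omega)]
      exact hbelow hk
    · rw [update_of_ne hne]
      obtain rfl | hne' := eq_or_ne (i' + 1) i
      · rw [update_self]
        exact habove i' h1 rfl
      · rw [update_of_ne hne']
        exact hc.canPrecede i' h1 hk

theorem tab_update (box : ℤ → ℕ → ℕ → ℚ) (hi : 1 ≤ i) (hik : i ≤ k) :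
    tab box s k (update c i v) =
      tab box s k c - (box (s + k - i) (c i) - box (s + k - i) v) := by
  have hmem : i ∈ Finset.Icc 1 k := Finset.mem_Icc.2 ⟨hi, hik⟩
  have hrest : ∑ i' ∈ (Finset.Icc 1 k).erase i, box (s + k - i') (update c i v i') =
      ∑ i' ∈ (Finset.Icc 1 k).erase i, box (s + k - i') (c i') :=
    Finset.sum_congr rfl fun i' hi' => by rw [update_of_ne (Finset.ne_of_mem_erase hi')]
  rw [tab, tab, ← Finset.add_sum_erase _ _ hmem, ← Finset.add_sum_erase _ _ hmem, hrest,
    update_self]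
  abel

/-- The tableau `[c_1,…,c_k]_s` contains the box `e` at level `l`. -/
def HasBox (s : ℤ) (k : ℕ) (c : ℕ → ℕ) (l : ℤ) (e : ℕ) : Prop :=
  ∃ i, 1 ≤ i ∧ i ≤ k ∧ s + k - i = l ∧ c i = e

theorem hasBox_update_iff (hc : e ≠ c i) (hv : e ≠ v) :
    HasBox s k (update c i v) l e ↔ HasBox s k c l e := by
  refine exists_congr fun i' => and_congr_right' (and_congr_right' (and_congr_right' ?_))
  obtain rfl | hne := eq_or_ne i' i
  · rw [update_self]
    exact iff_of_false hv.symm hc.symm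
  · rw [update_of_ne hne]

theorem hasBox_update_iff_of_level_ne (hl : s + k - i ≠ l) :
    HasBox s k (update c i v) l e ↔ HasBox s k c l e := by
  refine exists_congr fun i' => and_congr_right' (and_congr_right' (and_congr_right fun hl' => ?_))
  rw [update_of_ne (by rintro rfl; exact hl hl')]

theorem not_hasBox_update (hv : e ≠ v) (hl : s + k - i = l) :
    ¬ HasBox s k (update c i v) l e := by
  rintro ⟨i', -, -, hl', he⟩
  obtain rfl : i' = i := by omega
  exact hv (he.symm.trans (update_self ..))

open Classical in
theorem sum_ite_eq_ite_hasBox (s : ℤ) (k : ℕ) (c : ℕ → ℕ) (l : ℤ) (e : ℕ) :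
    ∑ i ∈ Finset.Icc 1 k, (if s + k - i = l ∧ c i = e then (1 : ℚ) else 0) =
      if HasBox s k c l e then 1 else 0 := by
  split_ifs with h
  · obtain ⟨i, h1, hk, hl, he⟩ := h
    rw [Finset.sum_eq_single_of_mem i (Finset.mem_Icc.2 ⟨h1, hk⟩), if_pos ⟨hl, he⟩]
    exact fun i' _ hne => if_neg fun h => hne (by omega)
  · refine Finset.sum_eq_zero fun i hi => if_neg fun hle => h ?_
    exact ⟨i, (Finset.mem_Icc.1 hi).1, (Finset.mem_Icc.1 hi).2, hle⟩

open Classical in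
/-- The contribution of the arrow `a` to the coefficient of `x_{m,j}` in `[c_1,…,c_k]_s`: the box
`src` counts positively at level `m - shift`, the box `tgt` negatively one level below. -/
noncomputable def BoxArrow.net (a : BoxArrow) (m s : ℤ) (k : ℕ) (c : ℕ → ℕ) : ℚ :=
  (if HasBox s k c (m - a.shift) a.src then 1 else 0) -
    if HasBox s k c (m - a.shift - 1) a.tgt then 1 else 0

theorem BoxArrow.net_eq_one_iff {m : ℤ} : a.net m s k c = 1 ↔
    HasBox s k c (m - a.shift) a.src ∧ ¬ HasBox s k c (m - a.shift - 1) a.tgt := by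
  rw [net]; split_ifs <;> norm_num <;> tauto

theorem BoxArrow.net_eq_neg_one_iff {m : ℤ} : a.net m s k c = -1 ↔
    ¬ HasBox s k c (m - a.shift) a.src ∧ HasBox s k c (m - a.shift - 1) a.tgt := by
  rw [net]; split_ifs <;> norm_num <;> tauto

theorem BoxArrow.net_eq_zero_iff {m : ℤ} : a.net m s k c = 0 ↔
    (HasBox s k c (m - a.shift) a.src ↔ HasBox s k c (m - a.shift - 1) a.tgt) := by
  rw [net]; split_ifs <;> norm_num <;> tauto

theorem BoxArrow.net_cases (a : BoxArrow) (m s : ℤ) (k : ℕ) (c : ℕ → ℕ) :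
    a.net m s k c = -1 ∨ a.net m s k c = 0 ∨ a.net m s k c = 1 := by
  rw [net_eq_neg_one_iff, net_eq_zero_iff, net_eq_one_iff]; tauto

open Classical in
theorem BoxArrow.net_update_of_disjoint {m : ℤ} (hsrc : a.src ≠ c i) (hsrc' : a.src ≠ v)
    (htgt : a.tgt ≠ c i) (htgt' : a.tgt ≠ v) : a.net m s k (update c i v) = a.net m s k c := by
  rw [net, net]
  exact congr_arg₂ _ (if_congr (hasBox_update_iff hsrc hsrc') rfl rfl)
    (if_congr (hasBox_update_iff htgt htgt') rfl rfl)

theorem IsArrowPair.tab_apply_occPos (h : IsArrowPair ι n j a b) (hm : 1 ≤ m)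
    (hc : ∀ i, 1 ≤ i → i ≤ k → c i ∈ Set.Icc 1 (2 * n)) :
    tab (boxD ι n) s k c (occPos ι j m) = a.net m s k c + b.net m s k c := by
  have hbox : ∀ i ∈ Finset.Icc 1 k, boxD ι n (s + k - i) (c i) (occPos ι j m) =
      a.coeff m (s + k - i) (c i) + b.coeff m (s + k - i) (c i) := fun i hi => by
    rw [Finset.mem_Icc] at hi
    exact h.boxD_apply hm (hc i hi.1 hi.2) _
  rw [tab, Finset.sum_apply, Finset.sum_congr rfl hbox]
  simp only [Finset.sum_add_distrib, BoxArrow.coeff, BoxArrow.net, Finset.sum_sub_distrib,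
    sum_ite_eq_ite_hasBox]

theorem BoxArrow.IsMove.exists_raise (h : a.IsMove ι n j b) (hC : a.src ∈ C → a.tgt ∈ C)
    (hc : IsColumn n C k c) (hm : 1 ≤ m) (ha : a.net m s k c = 1) (hb : 0 ≤ b.net m s k c) :
    ∃ c', IsColumn n C k c' ∧
      tab (boxD ι n) s k c' = tab (boxD ι n) s k c - betasj (cartanD n) ι m j ∧
      a.net m s k c' = 0 ∧ b.net m s k c' = b.net m s k c := by
  obtain ⟨⟨i, hi, hik, hlevel, hsrc⟩, hno_tgt⟩ := net_eq_one_iff.1 ha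
  refine ⟨update c i a.tgt, hc.update (hC (hsrc ▸ hc.mem i hi hik)) ?_ ?_, ?_, ?_, ?_⟩
  · rintro i' hi' rfl
    exact h.raise_above _ (hsrc ▸ hc.canPrecede i' hi' hik)
  · intro hik'
    obtain hlt | htgt | ⟨htgt, hshift⟩ := h.raise_below _ (hsrc ▸ hc.canPrecede i hi hik')
    · exact hlt
    · exact absurd ⟨i + 1, by omega, hik', by push_cast; omega, htgt⟩ hno_tgt
    · have hb_src : HasBox s k c (m - b.shift) b.src := by
        by_contra hno
        have hb_neg := net_eq_neg_one_iff.2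
          ⟨hno, i + 1, by omega, hik', by push_cast; omega, htgt⟩
        linarith
      obtain ⟨i', -, -, hlevel', hsrc'⟩ := hb_src
      obtain rfl : i' = i := by omega
      exact absurd (hsrc.symm.trans hsrc') h.src_ne_src
  · rw [tab_update _ hi hik, hsrc, h.sub_eq_betasj _ (by omega), hlevel, sub_add_cancel]
  · rw [net_eq_zero_iff, hasBox_update_iff_of_level_ne (l := m - a.shift - 1) (by omega)]
    exact iff_of_false (not_hasBox_update h.src_ne_tgt hlevel) hno_tgt
  · exact net_update_of_disjoint (hsrc ▸ h.src_ne_src.symm) h.tgt_ne_src.symm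
      (hsrc ▸ h.src_ne_tgt'.symm) h.tgt_ne_tgt.symm

theorem BoxArrow.IsMove.exists_lower (h : a.IsMove ι n j b) (hC : a.tgt ∈ C → a.src ∈ C)
    (hc : IsColumn n C k c) (hm : 2 ≤ m) (ha : a.net m s k c = -1) (hb : b.net m s k c ≤ 0) :
    ∃ c', IsColumn n C k c' ∧
      tab (boxD ι n) s k c' = tab (boxD ι n) s k c + betasj (cartanD n) ι (m - 1) j ∧
      a.net m s k c' = 0 ∧ b.net m s k c' = b.net m s k c := by
  obtain ⟨hno_src, i, hi, hik, hlevel, htgt⟩ := net_eq_neg_one_iff.1 ha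
  refine ⟨update c i a.src, hc.update (hC (htgt ▸ hc.mem i hi hik)) ?_ ?_, ?_, ?_, ?_⟩
  · rintro i' hi' rfl
    obtain hlt | hsrc | ⟨hsrc, hshift⟩ := h.lower_above _ (htgt ▸ hc.canPrecede i' hi' hik)
    · exact hlt
    · exact absurd ⟨i', hi', by omega, by push_cast at hlevel; omega, hsrc⟩ hno_src
    · have hb_tgt : HasBox s k c (m - b.shift - 1) b.tgt := by
        by_contra hno
        have hb_pos := net_eq_one_iff.2
          ⟨⟨i', hi', by omega, by push_cast at hlevel; omega, hsrc⟩, hno⟩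
        linarith
      obtain ⟨i, -, -, hlevel', htgt'⟩ := hb_tgt
      obtain rfl : i = i' + 1 := by omega
      exact absurd (htgt.symm.trans htgt') h.tgt_ne_tgt
  · exact fun hik' => h.lower_below _ (htgt ▸ hc.canPrecede i hi hik')
  · rw [tab_update _ hi hik, htgt, ← neg_sub (boxD _ _ _ a.src), h.sub_eq_betasj _ (by omega),
      hlevel, sub_neg_eq_add, sub_right_comm, sub_add_cancel]
  · rw [net_eq_zero_iff, hasBox_update_iff_of_level_ne (l := m - a.shift) (by omega)]
    exact iff_of_false hno_src (not_hasBox_update h.src_ne_tgt.symm hlevel)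
  · exact net_update_of_disjoint (htgt ▸ h.tgt_ne_src.symm) h.src_ne_src.symm
      (htgt ▸ h.tgt_ne_tgt.symm) h.src_ne_tgt'.symm

theorem BoxArrow.IsMove.exists_raise_of_nonneg (h : a.IsMove ι n j b)
    (hC : a.src ∈ C → a.tgt ∈ C) (hc : IsColumn n C k c) (hm : 1 ≤ m)
    (ha : 0 ≤ a.net m s k c) (hb : 0 ≤ b.net m s k c) :
    ∃ c', IsColumn n C k c' ∧
      tab (boxD ι n) s k c' =
        tab (boxD ι n) s k c - a.net m s k c • betasj (cartanD n) ι m j ∧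
      a.net m s k c' = 0 ∧ b.net m s k c' = b.net m s k c := by
  obtain ha' | ha' | ha' := net_cases a m s k c
  · linarith
  · exact ⟨c, hc, by rw [ha', zero_smul, sub_zero], ha', rfl⟩
  · rw [ha', one_smul]
    exact h.exists_raise hC hc hm ha' hb

theorem BoxArrow.IsMove.exists_lower_of_nonpos (h : a.IsMove ι n j b)
    (hC : a.tgt ∈ C → a.src ∈ C) (hc : IsColumn n C k c) (hm : 2 ≤ m)
    (ha : a.net m s k c ≤ 0) (hb : b.net m s k c ≤ 0) :
    ∃ c', IsColumn n C k c' ∧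
      tab (boxD ι n) s k c' =
        tab (boxD ι n) s k c - a.net m s k c • betasj (cartanD n) ι (m - 1) j ∧
      a.net m s k c' = 0 ∧ b.net m s k c' = b.net m s k c := by
  obtain ha' | ha' | ha' := net_cases a m s k c
  · rw [ha', neg_smul, one_smul, sub_neg_eq_add]
    exact h.exists_lower hC hc hm ha' hb
  · exact ⟨c, hc, by rw [ha', zero_smul, sub_zero], ha', rfl⟩
  · linarith

theorem IsArrowPair.exists_raise (h : IsArrowPair ι n j a b)
    (ha : a.src ∈ C → a.tgt ∈ C) (hb : b.src ∈ C → b.tgt ∈ C)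
    (hc : IsColumn n C k c) (hm : 1 ≤ m) (hpos : 0 < a.net m s k c + b.net m s k c) :
    ∃ c', IsColumn n C k c' ∧ tab (boxD ι n) s k c' =
      tab (boxD ι n) s k c - (a.net m s k c + b.net m s k c) • betasj (cartanD n) ι m j := by
  have hnonneg : 0 ≤ a.net m s k c ∧ 0 ≤ b.net m s k c := by
    obtain ha' | ha' | ha' := a.net_cases m s k c <;>
      obtain hb' | hb' | hb' := b.net_cases m s k c <;> constructor <;> linarith
  obtain ⟨c₁, hc₁, htab₁, ha₁, hb₁⟩ := h.left.exists_raise_of_nonneg ha hc hm hnonneg.1 hnonneg.2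
  obtain ⟨c₂, hc₂, htab₂, -⟩ :=
    h.right.exists_raise_of_nonneg hb hc₁ hm (hb₁ ▸ hnonneg.2) ha₁.ge
  exact ⟨c₂, hc₂, by rw [htab₂, htab₁, hb₁, add_smul, sub_sub]⟩

theorem IsArrowPair.exists_lower (h : IsArrowPair ι n j a b)
    (ha : a.tgt ∈ C → a.src ∈ C) (hb : b.tgt ∈ C → b.src ∈ C)
    (hc : IsColumn n C k c) (hm : 2 ≤ m) (hneg : a.net m s k c + b.net m s k c < 0) :
    ∃ c', IsColumn n C k c' ∧ tab (boxD ι n) s k c' =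
      tab (boxD ι n) s k c - (a.net m s k c + b.net m s k c) • betasj (cartanD n) ι (m - 1) j := by
  have hnonpos : a.net m s k c ≤ 0 ∧ b.net m s k c ≤ 0 := by
    obtain ha' | ha' | ha' := a.net_cases m s k c <;>
      obtain hb' | hb' | hb' := b.net_cases m s k c <;> constructor <;> linarith
  obtain ⟨c₁, hc₁, htab₁, ha₁, hb₁⟩ := h.left.exists_lower_of_nonpos ha hc hm hnonpos.1 hnonpos.2
  obtain ⟨c₂, hc₂, htab₂, -⟩ :=
    h.right.exists_lower_of_nonpos hb hc₁ hm (hb₁ ▸ hnonpos.2) ha₁.le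
  exact ⟨c₂, hc₂, by rw [htab₂, htab₁, hb₁, add_smul, sub_sub]⟩

theorem IsArrowPair.exists_Ssj_add_tab (h : IsArrowPair ι n j a b) (hι : Admissible n ι)
    (hj : j ∈ Finset.Icc 1 n) (hm : 1 ≤ m) (ha : a.src ∈ C ↔ a.tgt ∈ C)
    (hb : b.src ∈ C ↔ b.tgt ∈ C) (hC : C ⊆ Set.Icc 1 (2 * n)) (hc : IsColumn n C k c)
    {φ : ℕ → ℚ} (hφ : φ (occPos ι j m) = 0) :
    ∃ c', IsColumn n C k c' ∧
      Ssj (cartanD n) ι m j (φ + tab (boxD ι n) s k c) = φ + tab (boxD ι n) s k c' := by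
  have hcoeff : (φ + tab (boxD ι n) s k c) (occPos ι j m) = a.net m s k c + b.net m s k c := by
    rw [Pi.add_apply, hφ, zero_add, h.tab_apply_occPos hm fun i hi hik => hC (hc.mem i hi hik)]
  obtain hneg | hzero | hpos := lt_trichotomy (a.net m s k c + b.net m s k c) 0
  · rw [Ssj_eq_ite hι hj hm, hcoeff, if_neg hneg.not_gt]
    obtain rfl | hm' := hm.eq_or_lt
    · exact ⟨c, hc, by rw [Nat.cast_one, sub_self, betasj_zero, smul_zero, sub_zero]⟩
    · obtain ⟨c', hc', htab⟩ := h.exists_lower ha.2 hb.2 hc hm' hneg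
      exact ⟨c', hc', by rw [htab, add_sub_assoc]⟩
  · exact ⟨c, hc, Ssj_eq_self (hcoeff.trans hzero)⟩
  · rw [Ssj_eq_ite hι hj hm, hcoeff, if_pos hpos]
    obtain ⟨c', hc', htab⟩ := h.exists_raise ha.1 hb.1 hc hm hpos
    exact ⟨c', hc', by rw [htab, add_sub_assoc]⟩

end Columns

section BarredColumns

variable {n k b v : ℕ} {c : ℕ → ℕ}

/-- The column with top entry `v` followed by the entries of `c`. -/
def consColumn (v : ℕ) (c : ℕ → ℕ) (i : ℕ) : ℕ := if i = 1 then v else c (i - 1)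

theorem tab_congr (box : ℤ → ℕ → ℕ → ℚ) (s : ℤ) {c' : ℕ → ℕ}
    (h : ∀ i, 1 ≤ i → i ≤ k → c i = c' i) : tab box s k c = tab box s k c' :=
  Finset.sum_congr rfl fun i hi => by
    rw [h i (Finset.mem_Icc.1 hi).1 (Finset.mem_Icc.1 hi).2]

theorem tab_succ (box : ℤ → ℕ → ℕ → ℚ) (s : ℤ) (k : ℕ) (c : ℕ → ℕ) :
    tab box s (k + 1) c = box (s + k) (c 1) + tab box s k fun i => c (i + 1) := by
  rw [tab, tab, ← Finset.Ico_add_one_right_eq_Icc, ← Finset.Ico_add_one_right_eq_Icc,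
    Finset.sum_eq_sum_Ico_succ_bot (by omega), ← Finset.sum_Ico_add']
  push_cast
  simp only [add_sub_add_right_eq_sub, ← add_assoc, add_sub_cancel_right]

theorem tab_consColumn (box : ℤ → ℕ → ℕ → ℚ) (s : ℤ) (k v : ℕ) (c : ℕ → ℕ) :
    tab box s (k + 1) (consColumn v c) = box (s + k) v + tab box s k c := by
  rw [tab_succ, consColumn, if_pos rfl]
  exact congr_arg _ (tab_congr _ _ fun i hi _ => if_neg (by omega))

theorem canPrecede_iff_lt {x y : ℕ} (hy : n < y) : CanPrecede n x y ↔ x < y := by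
  unfold CanPrecede leD
  omega

theorem IsColumn.lt_succ (hb : n < b) (hc : IsColumn n (Set.Icc b (2 * n)) k c) {i : ℕ}
    (hi : 1 ≤ i) (hik : i < k) : c i < c (i + 1) :=
  (canPrecede_iff_lt (hb.trans_le (hc.mem (i + 1) (by omega) hik).1)).1 (hc.canPrecede i hi hik)

theorem IsColumn.tail (hb : n < b) (hc : IsColumn n (Set.Icc b (2 * n)) (k + 1) c) :
    IsColumn n (Set.Icc (b + 1) (2 * n)) k fun i => c (i + 1) where
  mem i hi hik :=
    ⟨(hc.mem i hi (by omega)).1.trans_lt (hc.lt_succ hb hi (by omega)),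
      (hc.mem (i + 1) (by omega) (by omega)).2⟩
  canPrecede i _ hik := hc.canPrecede (i + 1) (by omega) (by omega)

theorem IsColumn.raise_bound (hb : n < b) (hc : IsColumn n (Set.Icc b (2 * n)) k c)
    (h : 1 ≤ k → c 1 ≠ b) : IsColumn n (Set.Icc (b + 1) (2 * n)) k c where
  mem i hi hik := by
    refine ⟨?_, (hc.mem i hi hik).2⟩
    obtain rfl | hi' := hi.eq_or_lt
    · exact (hc.mem 1 hi hik).1.lt_of_ne (h hik).symm
    · obtain ⟨i, rfl⟩ := Nat.exists_eq_add_of_le' hi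
      exact (hc.mem i (by omega) (by omega)).1.trans_lt (hc.lt_succ hb (by omega) (by omega))
  canPrecede := hc.canPrecede

theorem IsColumn.consColumn {C : Set ℕ} (hc : IsColumn n C k c) (hv : v ∈ C)
    (h : 1 ≤ k → CanPrecede n v (c 1)) : IsColumn n C (k + 1) (consColumn v c) where
  mem i hi hik := by
    unfold _root_.consColumn
    split_ifs with hi1
    · exact hv
    · exact hc.mem (i - 1) (by omega) (by omega)
  canPrecede i hi hik := by
    unfold _root_.consColumn
    rw [if_neg (show i + 1 ≠ 1 by omega), Nat.add_sub_cancel]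
    split_ifs with hi1
    · rw [hi1]
      exact h (by omega)
    · simpa only [Nat.sub_add_cancel hi] using hc.canPrecede (i - 1) (by omega) (by omega)

theorem IsColumn.mono {C D : Set ℕ} (hCD : C ⊆ D) (hc : IsColumn n C k c) : IsColumn n D k c :=
  ⟨fun i hi hik => hCD (hc.mem i hi hik), hc.canPrecede⟩

theorem IsColumn.consColumn_barred (hb : n < b) (hb' : b ≤ 2 * n)
    (hc : IsColumn n (Set.Icc (b + 1) (2 * n)) k c) :
    IsColumn n (Set.Icc b (2 * n)) (k + 1) (_root_.consColumn b c) := by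
  refine (hc.mono (Set.Icc_subset_Icc_left (by omega))).consColumn ⟨le_rfl, hb'⟩ fun hk => ?_
  have hlt : b < c 1 := (hc.mem 1 le_rfl hk).1
  exact (canPrecede_iff_lt (hb.trans hlt)).2 hlt

theorem IsColumn.length_le (hb : n < b) (hc : IsColumn n (Set.Icc b (2 * n)) k c) :
    k ≤ 2 * n + 1 - b := by
  induction k generalizing b c with
  | zero => exact Nat.zero_le _
  | succ k ih =>
    have hk := ih (hb.trans (Nat.lt_succ_self b)) (hc.tail hb)
    have hb' := hc.mem 1 le_rfl (by omega)
    rw [Set.mem_Icc] at hb'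
    omega

theorem IsColumn.barred_cases (hc : IsColumn n (Set.Icc (n + 1) (2 * n)) k c) :
    IsColumn n (Set.Icc (n + 3) (2 * n)) k c ∨
    (∃ k', k = k' + 1 ∧ (c 1 = n + 1 ∨ c 1 = n + 2) ∧
      IsColumn n (Set.Icc (n + 3) (2 * n)) k' fun i => c (i + 1)) ∨
    ∃ k', k = k' + 2 ∧ c 1 = n + 1 ∧ c 2 = n + 2 ∧
      IsColumn n (Set.Icc (n + 3) (2 * n)) k' fun i => c (i + 2) := by
  by_cases h1 : 1 ≤ k ∧ c 1 = n + 1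
  · obtain ⟨k, rfl⟩ := Nat.exists_eq_add_of_le' h1.1
    have htail := hc.tail (by omega)
    by_cases h2 : 1 ≤ k ∧ c 2 = n + 2
    · obtain ⟨k, rfl⟩ := Nat.exists_eq_add_of_le' h2.1
      exact .inr (.inr ⟨k, rfl, h1.2, h2.2, htail.tail (by omega)⟩)
    · exact .inr (.inl ⟨k, rfl, .inl h1.2, htail.raise_bound (by omega) (not_and.1 h2)⟩)
  · have hc' := hc.raise_bound (by omega) (not_and.1 h1)
    by_cases h2 : 1 ≤ k ∧ c 1 = n + 2
    · obtain ⟨k, rfl⟩ := Nat.exists_eq_add_of_le' h2.1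
      exact .inr (.inl ⟨k, rfl, .inr h2.2, hc'.tail (by omega)⟩)
    · exact .inl (hc'.raise_bound (by omega) (not_and.1 h2))

end BarredColumns

section Spin

variable {n k m : ℕ} {ι : ℕ → ℕ} {s : ℤ} {c : ℕ → ℕ}

theorem boxD_apply_occPos_self (hn : 3 ≤ n) (hι : Admissible n ι) (hm : 1 ≤ m) {e : ℕ}
    (he : e ∈ Set.Icc (n + 1) (2 * n)) (s : ℤ) :
    boxD ι n s e (occPos ι n m) =
      if (e = n + 1 ∨ e = n + 2) ∧ s + PD ι n n + 1 = m then -1 else 0 := by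
  rw [boxD_apply_occPos hn hι (by simp; omega) hm (Set.Icc_subset_Icc_left (by omega) he)]
  rw [Set.mem_Icc] at he
  simp only [arrowD, arrowBarD, BoxArrow.coeff]
  grind

theorem tab_apply_occPos_self_of_le (hn : 3 ≤ n) (hι : Admissible n ι) (hm : 1 ≤ m)
    (hc : IsColumn n (Set.Icc (n + 3) (2 * n)) k c) :
    tab (boxD ι n) s k c (occPos ι n m) = 0 := by
  rw [tab, Finset.sum_apply]
  refine Finset.sum_eq_zero fun i hi => ?_
  rw [Finset.mem_Icc] at hi
  have hmem := hc.mem i hi.1 hi.2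
  rw [boxD_apply_occPos_self hn hι hm (Set.Icc_subset_Icc_left (by omega) hmem), if_neg]
  rw [Set.mem_Icc] at hmem
  omega

/-- The tableau `[ovl(n+1),c_1,…,c_k]_s`. -/
noncomputable def spinTab (ι : ℕ → ℕ) (n : ℕ) (s : ℤ) (k : ℕ) (c : ℕ → ℕ) : ℕ → ℚ :=
  xD ι n (s + k) n + tab (boxD ι n) s k c

theorem spinTab_tail (h1 : c 1 = 0) :
    spinTab ι n s k (fun i => c (i + 1)) = tab (boxD ι n) s (k + 1) c := by
  rw [tab_succ, h1, boxD_zero, spinTab]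

theorem spinTab_add_two (hn : 3 ≤ n) (hι : Admissible n ι) (hA : Adapted n (cartanD n) ι)
    (h1 : c 1 = n + 1) (h2 : c 2 = n + 2) (hs : 1 ≤ s + k + PD ι n n) :
    spinTab ι n s (k + 2) c =
      spinTab ι n s k (fun i => c (i + 2)) - betasj (cartanD n) ι (s + k + PD ι n n) n := by
  rw [spinTab, spinTab, tab_succ, tab_succ, h1, h2, boxD_add_one hn, boxD_add_two hn,
    betasj_cartanD_self hn hι hA hs]
  push_cast
  simp only [← add_assoc, show s + k + 2 = s + k + 1 + 1 by ring]
  abel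

theorem spinTab_apply_occPos (hι : Admissible n ι) (hn : 1 ≤ n) (hm : 1 ≤ m) :
    spinTab ι n s k c (occPos ι n m) =
      (if s + k + PD ι n n = m then 1 else 0) + tab (boxD ι n) s k c (occPos ι n m) := by
  rw [spinTab, Pi.add_apply, xD_apply_occPos hι (by simp; omega) hm]
  simp only [true_and]

theorem Ssj_spinTab_of_le (hn : 3 ≤ n) (hι : Admissible n ι) (hA : Adapted n (cartanD n) ι)
    (hm : 1 ≤ m) (hc : IsColumn n (Set.Icc (n + 3) (2 * n)) k c) :
    Ssj (cartanD n) ι m n (spinTab ι n s k c) = if s + k + PD ι n n = m then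
      spinTab ι n s (k + 2) (consColumn (n + 1) (consColumn (n + 2) c)) else
      spinTab ι n s k c := by
  have hcoeff : spinTab ι n s k c (occPos ι n m) = if s + k + PD ι n n = m then 1 else 0 := by
    rw [spinTab_apply_occPos hι (by omega) hm, tab_apply_occPos_self_of_le hn hι hm hc, add_zero]
  split_ifs with hlevel
  · have htail : tab (boxD ι n) s k
        (fun i => consColumn (n + 1) (consColumn (n + 2) c) (i + 2)) = tab (boxD ι n) s k c :=
      tab_congr _ _ fun i hi _ => by simp [consColumn]; omega
    have hpair := spinTab_add_two (c := consColumn (n + 1) (consColumn (n + 2) c)) hn hι hA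
      rfl rfl (s := s) (k := k) (by omega)
    rw [Ssj_eq_ite hι (by simp; omega) hm, hcoeff, if_pos hlevel, if_pos zero_lt_one, one_smul,
      ← hlevel, hpair, spinTab, spinTab, htail]
  · exact Ssj_eq_self (hcoeff.trans (if_neg hlevel))

theorem Ssj_spinTab_of_single (hn : 3 ≤ n) (hι : Admissible n ι) (hm : 1 ≤ m)
    (h1 : c 1 = n + 1 ∨ c 1 = n + 2)
    (hc : IsColumn n (Set.Icc (n + 3) (2 * n)) k fun i => c (i + 1)) :
    Ssj (cartanD n) ι m n (spinTab ι n s (k + 1) c) = spinTab ι n s (k + 1) c := by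
  have hzero : spinTab ι n s (k + 1) c (occPos ι n m) = 0 := by
    rw [spinTab_apply_occPos hι (by omega) hm, tab_succ, Pi.add_apply,
      boxD_apply_occPos_self hn hι hm (by simp; omega), tab_apply_occPos_self_of_le hn hι hm hc]
    push_cast
    grind
  exact Ssj_eq_self hzero

theorem Ssj_spinTab_of_pair (hn : 3 ≤ n) (hι : Admissible n ι) (hA : Adapted n (cartanD n) ι)
    (hm : 1 ≤ m) (h1 : c 1 = n + 1) (h2 : c 2 = n + 2)
    (hc : IsColumn n (Set.Icc (n + 3) (2 * n)) k fun i => c (i + 2)) :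
    Ssj (cartanD n) ι m n (spinTab ι n s (k + 2) c) =
      if s + k + PD ι n n + 1 = m ∧ 2 ≤ m then spinTab ι n s k fun i => c (i + 2)
      else spinTab ι n s (k + 2) c := by
  have hcoeff : spinTab ι n s (k + 2) c (occPos ι n m) =
      if s + k + PD ι n n + 1 = m then -1 else 0 := by
    rw [spinTab_apply_occPos hι (by omega) hm, tab_succ, Pi.add_apply, tab_succ, Pi.add_apply,
      boxD_apply_occPos_self hn hι hm (by simp; omega),
      boxD_apply_occPos_self hn hι hm (by simp; omega), tab_apply_occPos_self_of_le hn hι hm hc]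
    push_cast
    grind
  by_cases hlevel : s + k + PD ι n n + 1 = m
  · rw [Ssj_eq_ite hι (by simp; omega) hm, hcoeff, if_pos hlevel, if_neg (by norm_num), neg_smul,
      one_smul, sub_neg_eq_add]
    split_ifs with hm2
    · rw [spinTab_add_two hn hι hA h1 h2 (by omega), eq_sub_of_add_eq hlevel, sub_add_cancel]
    · obtain rfl : m = 1 := by omega
      rw [Nat.cast_one, sub_self, betasj_zero, add_zero]
  · rw [if_neg fun h => hlevel h.1]
    exact Ssj_eq_self (hcoeff.trans (if_neg hlevel))

theorem exists_Ssj_spinTab_self (hn : 3 ≤ n) (hι : Admissible n ι)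
    (hA : Adapted n (cartanD n) ι) (hm : 1 ≤ m)
    (hc : IsColumn n (Set.Icc (n + 1) (2 * n)) k c) :
    ∃ k' c', k' % 2 = k % 2 ∧ IsColumn n (Set.Icc (n + 1) (2 * n)) k' c' ∧
      Ssj (cartanD n) ι m n (spinTab ι n s k c) = spinTab ι n s k' c' := by
  obtain hc3 | ⟨k, rfl, h1, hc3⟩ | ⟨k, rfl, h1, h2, hc3⟩ := hc.barred_cases
  · rw [Ssj_spinTab_of_le hn hι hA hm hc3]
    split_ifs
    · have hc1 := (hc3.consColumn_barred (by omega) (by omega)).consColumn_barred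
        (by omega) (by omega)
      exact ⟨_, _, Nat.add_mod_right .., hc1, rfl⟩
    · exact ⟨k, c, rfl, hc, rfl⟩
  · exact ⟨_, c, rfl, hc, Ssj_spinTab_of_single hn hι hm h1 hc3⟩
  · rw [Ssj_spinTab_of_pair hn hι hA hm h1 h2 hc3]
    split_ifs
    · exact ⟨k, _, (Nat.add_mod_right ..).symm, hc3.mono (Set.Icc_subset_Icc_left (by omega)),
        rfl⟩
    · exact ⟨_, c, rfl, hc, rfl⟩

end Spin

section Closure

variable {n : ℕ} {ι : ℕ → ℕ} {j k m : ℕ} {s : ℤ} {c : ℕ → ℕ}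

theorem exists_Ssj_tab (hn : 3 ≤ n) (hι : Admissible n ι) (hA : Adapted n (cartanD n) ι)
    (hj : j ∈ Finset.Icc 1 n) (hm : 1 ≤ m) (hc : IsColumn n (Set.Icc 1 (2 * n)) k c) :
    ∃ c', IsColumn n (Set.Icc 1 (2 * n)) k c' ∧
      Ssj (cartanD n) ι m j (tab (boxD ι n) s k c) = tab (boxD ι n) s k c' := by
  have hjn := Finset.mem_Icc.1 hj
  have hpair := isArrowPair_arrowD hn hι hA hj
  simpa only [zero_add] using hpair.exists_Ssj_add_tab hι hj hm (φ := 0)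
    (by grind [arrowD]) (by grind [arrowBarD]) subset_rfl hc rfl

theorem exists_Ssj_spinTab_of_ne (hn : 3 ≤ n) (hι : Admissible n ι)
    (hA : Adapted n (cartanD n) ι) (hj : j ∈ Finset.Icc 1 n) (hjn : j ≠ n) (hm : 1 ≤ m)
    (hc : IsColumn n (Set.Icc (n + 1) (2 * n)) k c) :
    ∃ c', IsColumn n (Set.Icc (n + 1) (2 * n)) k c' ∧
      Ssj (cartanD n) ι m j (spinTab ι n s k c) = spinTab ι n s k c' := by
  have hj' := Finset.mem_Icc.1 hj
  have hpair := isArrowPair_arrowD hn hι hA hj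
  have hspin : xD ι n (s + k) n (occPos ι j m) = 0 := by
    rw [xD_apply_occPos hι hj hm, if_neg fun h => hjn h.1.symm]
  exact hpair.exists_Ssj_add_tab hι hj hm (by grind [arrowD]) (by grind [arrowBarD])
    (Set.Icc_subset_Icc_left (by omega)) hc hspin

theorem exists_Ssj_spinTab (hn : 3 ≤ n) (hι : Admissible n ι) (hA : Adapted n (cartanD n) ι)
    (hj : j ∈ Finset.Icc 1 n) (hm : 1 ≤ m) (hc : IsColumn n (Set.Icc (n + 1) (2 * n)) k c) :
    ∃ k' c', k' % 2 = k % 2 ∧ IsColumn n (Set.Icc (n + 1) (2 * n)) k' c' ∧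
      Ssj (cartanD n) ι m j (spinTab ι n s k c) = spinTab ι n s k' c' := by
  obtain rfl | hjn := eq_or_ne j n
  · exact exists_Ssj_spinTab_self hn hι hA hm hc
  · obtain ⟨c', hc', hS⟩ := exists_Ssj_spinTab_of_ne hn hι hA hj hjn hm hc
    exact ⟨k, c', rfl, hc', hS⟩

theorem mem_TabD_iff {T : ℕ → ℚ} : T ∈ TabD ι n ↔
    (∃ k s c, 1 ≤ k ∧ k ≤ n - 2 ∧ 1 - (PD ι n k : ℤ) ≤ s ∧ IsColumn n (Set.Icc 1 (2 * n)) k c ∧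
      T = tab (boxD ι n) s k c) ∨
    ∃ k s c, ((k + 1) % 2 = 0 → 1 - (PD ι n (n - 1) : ℤ) ≤ s) ∧
      ((k + 1) % 2 = 1 → 1 - (PD ι n n : ℤ) ≤ s) ∧ IsColumn n (Set.Icc (n + 1) (2 * n)) k c ∧
      T = spinTab ι n s k c := by
  constructor
  · rintro ⟨k, s, c, ⟨hk1, hkn, hmem, hprec, hs⟩ | ⟨h0, hk1, -, hmem, hlt, heven, hodd⟩, rfl⟩
    · exact .inl ⟨k, s, c, hk1, hkn, hs, ⟨hmem, hprec⟩, rfl⟩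
    · obtain ⟨k, rfl⟩ := Nat.exists_eq_add_of_le' hk1
      refine .inr ⟨k, s, fun i => c (i + 1), heven, hodd, ⟨?_, ?_⟩, (spinTab_tail h0).symm⟩
      · exact fun i hi hik => hmem (i + 1) (by omega) (by omega)
      · intro i hi hik
        rw [canPrecede_iff_lt (hmem (i + 1 + 1) (by omega) (by omega)).1]
        exact hlt (i + 1) (by omega) (by omega)
  · rintro (⟨k, s, c, hk1, hkn, hs, hc, rfl⟩ | ⟨k, s, c, heven, hodd, hc, rfl⟩)
    · exact ⟨k, s, c, .inl ⟨hk1, hkn, hc.mem, hc.canPrecede, hs⟩, rfl⟩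
    · have hk := hc.length_le (Nat.lt_succ_self n)
      refine ⟨k + 1, s, consColumn 0 c, .inr ⟨rfl, by omega, by omega, ?_, ?_, heven, hodd⟩,
        by rw [tab_consColumn, boxD_zero, spinTab]⟩
      · intro i hi hik
        rw [consColumn, if_neg (by omega)]
        exact hc.mem (i - 1) (by omega) (by omega)
      · intro i hi hik
        rw [consColumn, consColumn, if_neg (by omega), if_neg (by omega), Nat.add_sub_cancel]
        simpa only [Nat.sub_add_cancel (show 1 ≤ i by omega)] using
          hc.lt_succ (Nat.lt_succ_self n) (i := i - 1) (by omega) (by omega)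

theorem Tab_D_closed_general (hn : 3 ≤ n) (hι : Admissible n ι) (hA : Adapted n (cartanD n) ι)
    {T : ℕ → ℚ} (hT : T ∈ TabD ι n) (hm : 1 ≤ m) (hj : j ∈ Finset.Icc 1 n) :
    Ssj (cartanD n) ι m j T ∈ TabD ι n := by
  rw [mem_TabD_iff] at hT ⊢
  obtain ⟨k, s, c, hk1, hkn, hs, hc, rfl⟩ | ⟨k, s, c, heven, hodd, hc, rfl⟩ := hT
  · obtain ⟨c', hc', hS⟩ := exists_Ssj_tab hn hι hA hj hm hc
    exact .inl ⟨k, s, c', hk1, hkn, hs, hc', hS⟩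
  · obtain ⟨k', c', hk', hc', hS⟩ := exists_Ssj_spinTab hn hι hA hj hm hc
    exact .inr ⟨k', s, c', by omega, by omega, hc', hS⟩

end Closure

/-- Proposition 4.4 (closure): for an adapted sequence of type D, the set `Tab_{D,ι}` is
closed under all operators `S_{m,j}`. -/
theorem Tab_D_closed (n : ℕ) (hn : 4 ≤ n) (ι : ℕ → ℕ)
    (hadm : Admissible n ι) (hadap : Adapted n (cartanD n) ι) :
    ∀ T ∈ TabD ι n, ∀ m j, 1 ≤ m → 1 ≤ j → j ≤ n →
      Ssj (cartanD n) ι m j T ∈ TabD ι n :=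
  fun _ hT _ _ hm hj1 hjn =>
    Tab_D_closed_general (by omega) hadm hadap hT hm (Finset.mem_Icc.2 ⟨hj1, hjn⟩)
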